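/- arXiv:1505.06936 — 3 statements merged into one kernel-verified Lean document; each statement's English description precedes it below -/
import Mathlib

section
/- Let F be a Finsler function on ℝⁿ. Then F is independent of its first argument (i.e. (ℝⁿ, F) is a Minkowski space: F(x,y) = F(x',y) for all x, x', y) if and only if for every x ∈ ℝⁿ, every y ≠ 0 and every index i: ∑_k ∂²(F²)/∂x^k∂y^i(x,y)·y^k = ½·∑_k ∂²(F²)/∂x^i∂y^k(x,y)·y^k. -/
open scoped BigOperators Topology
noncomputable section

abbrev E (n : ℕ) := Fin n → ℝ

/-- Partial derivative with respect to the base coordinate `x^i`. -/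
def pdx {n : ℕ} (i : Fin n) (f : E n × E n → ℝ) (p : E n × E n) : ℝ :=
  fderiv ℝ f p (Pi.single i 1, 0)

/-- Partial derivative with respect to the fibre coordinate `y^i`. -/
def pdy {n : ℕ} (i : Fin n) (f : E n × E n → ℝ) (p : E n × E n) : ℝ :=
  fderiv ℝ f p (0, Pi.single i 1)

/-- A Finsler function on `ℝⁿ`. -/
structure IsFinsler {n : ℕ} (F : E n × E n → ℝ) : Prop where
  smooth : ContDiffOn ℝ (⊤ : ℕ∞) F {p : E n × E n | p.2 ≠ 0}
  homog : ∀ (x y : E n) (c : ℝ), 0 < c → F (x, c • y) = c * F (x, y)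
  pos : ∀ (x y : E n), y ≠ 0 → 0 < F (x, y)
  posDef : ∀ (x y : E n), y ≠ 0 →
    (Matrix.of fun i j : Fin n =>
      (1 / 2) * pdy i (pdy j (fun p => F p ^ 2)) (x, y)).PosDef

/-- A geodesic of `(ℝⁿ, F)`: a `C²` curve on a nontrivial open interval, with nowhere
vanishing velocity, positive constant speed, satisfying the Euler–Lagrange equations. -/
structure IsGeodesic {n : ℕ} (F : E n × E n → ℝ) (γ : ℝ → E n) (t₁ t₂ : ℝ) : Prop where
  lt : t₁ < t₂
  smooth : ContDiffOn ℝ 2 γ (Set.Ioo t₁ t₂)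
  vel : ∀ t ∈ Set.Ioo t₁ t₂, deriv γ t ≠ 0
  constSpeed : ∃ c : ℝ, 0 < c ∧ ∀ t ∈ Set.Ioo t₁ t₂, F (γ t, deriv γ t) = c
  eulerLagrange : ∀ (i : Fin n), ∀ t ∈ Set.Ioo t₁ t₂,
    deriv (fun s => pdy i F (γ s, deriv γ s)) t = pdx i F (γ t, deriv γ t)

/-- The Hamel equations in the standard coordinates. -/
def SatisfiesHamel {n : ℕ} (F : E n × E n → ℝ) : Prop :=
  ∀ (x y : E n), y ≠ 0 → ∀ i : Fin n,
    ∑ k, pdx k (pdy i F) (x, y) * y k = ∑ k, pdx i (pdy k F) (x, y) * y k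

/-- `(ℝⁿ, F)` is rectilinear in the standard coordinates. -/
def Rectilinear {n : ℕ} (F : E n × E n → ℝ) : Prop :=
  ∀ (γ : ℝ → E n) (t₁ t₂ : ℝ), IsGeodesic F γ t₁ t₂ →
    ∃ (f : ℝ → ℝ) (a b : E n), a ≠ 0 ∧
      ContDiffOn ℝ 2 f (Set.Ioo t₁ t₂) ∧
      (∀ t ∈ Set.Ioo t₁ t₂, 0 < deriv f t) ∧
      ∀ t ∈ Set.Ioo t₁ t₂, γ t = f t • a + b


lemma pdx_zero_of_indep {n : ℕ} (f : E n × E n → ℝ)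
    (h : ∀ x x' y : E n, f (x, y) = f (x', y)) (i : Fin n) (p : E n × E n) :
    pdx i f p = 0 := by
  unfold pdx
  by_cases hd : DifferentiableAt ℝ f p
  · rw [← hd.lineDeriv_eq_fderiv, lineDeriv]
    have : (fun t : ℝ => f (p + t • ((Pi.single i 1, 0) : E n × E n))) = fun _ => f p := by
      funext t
      obtain ⟨x, y⟩ := p
      simpa using h _ _ y
    rw [this]
    simp
  · rw [fderiv_zero_of_not_differentiableAt hd]
    simp

lemma pdy_indep {n : ℕ} (f : E n × E n → ℝ)
    (h : ∀ x x' y : E n, f (x, y) = f (x', y)) (i : Fin n) (x x' y : E n) :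
    pdy i f (x, y) = pdy i f (x', y) := by
  unfold pdy
  have h1 : (fun p => f (p + ((x' - x, 0) : E n × E n))) = f := by
    funext p
    obtain ⟨a, b⟩ := p
    simpa using h _ _ b
  have h2 := fderiv_comp_add_right (𝕜 := ℝ) (f := f) (x := (x, y)) ((x' - x, 0) : E n × E n)
  rw [h1] at h2
  rw [h2]
  simp

lemma vec_sum {n : ℕ} (y : E n) : y = ∑ k, y k • (Pi.single k 1 : E n) := by
  funext j
  simp [Finset.sum_apply, Pi.single_apply]

lemma inl_sum {n : ℕ} (T : E n × E n →L[ℝ] ℝ) (y : E n) :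
    T (y, 0) = ∑ k, T (Pi.single k 1, 0) * y k := by
  have : T (y, 0) = (T.comp (ContinuousLinearMap.inl ℝ (E n) (E n))) y := by simp
  rw [this]
  conv_lhs => rw [vec_sum y]
  rw [map_sum]
  simp [mul_comm]

lemma inr_sum {n : ℕ} (T : E n × E n →L[ℝ] ℝ) (y : E n) :
    T (0, y) = ∑ k, T (0, Pi.single k 1) * y k := by
  have : T (0, y) = (T.comp (ContinuousLinearMap.inr ℝ (E n) (E n))) y := by simp
  rw [this]
  conv_lhs => rw [vec_sum y]
  rw [map_sum]
  simp [mul_comm]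

lemma two_le_smooth : (2 : WithTop ℕ∞) ≤ ((⊤ : ℕ∞) : WithTop ℕ∞) := by
  have h : ((2 : ℕ∞) : WithTop ℕ∞) ≤ ((⊤ : ℕ∞) : WithTop ℕ∞) := WithTop.coe_le_coe.2 le_top
  exact h

lemma backward {n : ℕ} (L : E n × E n → ℝ)
    (hL : ContDiffOn ℝ (⊤ : ℕ∞) L {p : E n × E n | p.2 ≠ 0})
    (hom : ∀ (x y : E n) (c : ℝ), 0 < c → L (x, c • y) = c ^ 2 * L (x, y))
    (H : ∀ (x y : E n), y ≠ 0 → ∀ i : Fin n,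
      ∑ k, pdx k (pdy i L) (x, y) * y k =
        (1 / 2) * ∑ k, pdx i (pdy k L) (x, y) * y k) (x x' y : E n) (hy : y ≠ 0) :
    L (x, y) = L (x', y) := by
  have hU : IsOpen {p : E n × E n | p.2 ≠ 0} := isOpen_ne_fun continuous_snd continuous_const
  have hnhds : ∀ p : E n × E n, p.2 ≠ 0 → {p : E n × E n | p.2 ≠ 0} ∈ 𝓝 p :=
    fun p hp => hU.mem_nhds hp
  have hC : ∀ p : E n × E n, p.2 ≠ 0 → ContDiffAt ℝ (⊤ : ℕ∞) L p :=
    fun p hp => hL.contDiffAt (hnhds p hp)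
  have hD : ∀ p : E n × E n, p.2 ≠ 0 → DifferentiableAt ℝ L p :=
    fun p hp => (hC p hp).differentiableAt (by simp)
  have hDD : ∀ p : E n × E n, p.2 ≠ 0 → DifferentiableAt ℝ (fderiv ℝ L) p := fun p hp =>
    (((hC p hp).of_le two_le_smooth).fderiv_right (m := 1) (by norm_num)).differentiableAt (by simp)
  -- derivative of directional derivatives
  have key : ∀ (p v w : E n × E n), p.2 ≠ 0 →
      fderiv ℝ (fun q => fderiv ℝ L q v) p w = fderiv ℝ (fderiv ℝ L) p w v := by
    intro p v w hp
    have := ((hDD p hp).hasFDerivAt.clm_apply (hasFDerivAt_const v p)).fderiv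
    rw [this]
    simp
  -- varying directions
  have key2 : ∀ (T : E n × E n →L[ℝ] E n × E n) (p w : E n × E n), p.2 ≠ 0 →
      fderiv ℝ (fun q => fderiv ℝ L q (T q)) p w
        = fderiv ℝ (fderiv ℝ L) p w (T p) + fderiv ℝ L p (T w) := by
    intro T p w hp
    have := ((hDD p hp).hasFDerivAt.clm_apply (T.hasFDerivAt (x := p))).fderiv
    rw [this]
    simp [add_comm]
  have symm : ∀ (p v w : E n × E n), p.2 ≠ 0 →
      fderiv ℝ (fderiv ℝ L) p v w = fderiv ℝ (fderiv ℝ L) p w v := by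
    intro p v w hp
    exact (((hC p hp).of_le two_le_smooth).isSymmSndFDerivAt (by simp)) v w
  -- Euler
  have euler : ∀ p : E n × E n, p.2 ≠ 0 → fderiv ℝ L p (0, p.2) = 2 * L p := by
    rintro ⟨a, b⟩ hp
    have h1 : HasDerivAt (fun t : ℝ => L ((a, 0) + t • ((0, b) : E n × E n)))
        (fderiv ℝ L (a, b) (0, b)) 1 := by
      have h2 : HasDerivAt (fun t : ℝ => (a, 0) + t • ((0, b) : E n × E n)) (0, b) 1 := by
        simpa using ((hasDerivAt_id (1:ℝ)).smul_const ((0, b) : E n × E n)).const_add (a, 0)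
      have h3 : HasFDerivAt L (fderiv ℝ L (a, b))
          ((fun t : ℝ => (a, 0) + t • ((0, b) : E n × E n)) 1) := by
        simpa using (hD _ hp).hasFDerivAt
      exact h3.comp_hasDerivAt 1 h2
    have h4 : HasDerivAt (fun t : ℝ => t ^ 2 * L (a, b)) (2 * L (a, b)) 1 := by
      simpa using (hasDerivAt_pow 2 (1:ℝ)).mul_const (L (a, b))
    have h5 : (fun t : ℝ => L ((a, 0) + t • ((0, b) : E n × E n))) =ᶠ[𝓝 1]
        fun t : ℝ => t ^ 2 * L (a, b) := by
      filter_upwards [lt_mem_nhds (zero_lt_one (α := ℝ))] with t ht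
      simpa using hom a b t ht
    exact h1.unique (h4.congr_of_eventuallyEq h5)
  have E1 : ∀ (p : E n × E n) (v : E n), p.2 ≠ 0 →
      fderiv ℝ (fderiv ℝ L) p (v, 0) (0, p.2) = 2 * fderiv ℝ L p (v, 0) := by
    intro p v hp
    have h := key2 ((ContinuousLinearMap.inr ℝ (E n) (E n)).comp
      (ContinuousLinearMap.snd ℝ (E n) (E n))) p (v, 0) hp
    have h2 : (fun q : E n × E n => fderiv ℝ L q (((ContinuousLinearMap.inr ℝ (E n) (E n)).comp
      (ContinuousLinearMap.snd ℝ (E n) (E n))) q)) =ᶠ[𝓝 p] fun q => 2 * L q := by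
      filter_upwards [hnhds p hp] with q hq
      simpa using euler q hq
    rw [h2.fderiv_eq, fderiv_const_mul (hD p hp)] at h
    have h00 : fderiv ℝ L p (0, 0) = 0 := map_zero (fderiv ℝ L p)
    simpa [h00] using h.symm
  have HB : ∀ (p : E n × E n) (v : E n), p.2 ≠ 0 →
      fderiv ℝ (fderiv ℝ L) p (p.2, 0) (0, v) = fderiv ℝ L p (v, 0) := by
    rintro ⟨a, b⟩ v hp
    have hi : ∀ i, fderiv ℝ (fderiv ℝ L) (a, b) (b, 0) (0, Pi.single i 1)
        = fderiv ℝ L (a, b) (Pi.single i 1, 0) := by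
      intro i
      have h := H a b hp i
      have e1 : ∀ k j, pdx k (pdy j L) (a, b)
          = fderiv ℝ (fderiv ℝ L) (a, b) (Pi.single k 1, 0) (0, Pi.single j 1) :=
        fun k j => key (a, b) (0, Pi.single j 1) (Pi.single k 1, 0) hp
      simp only [e1] at h
      rw [← inr_sum (fderiv ℝ (fderiv ℝ L) (a, b) (Pi.single i 1, 0)) b,
        E1 (a, b) _ hp] at h
      rw [symm _ _ _ hp, inl_sum]
      simp only [symm (a, b) (0, Pi.single i 1) _ hp]
      rw [h]; ring
    rw [inr_sum, inl_sum]
    simp only [hi]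
  have Z : ∀ p : E n × E n, p.2 ≠ 0 → fderiv ℝ L p (p.2, 0) = 0 := by
    intro p hp
    have h1 := HB p p.2 hp
    have h2 := E1 p p.2 hp
    linarith
  have A0 : ∀ (p : E n × E n) (v : E n), p.2 ≠ 0 → fderiv ℝ L p (v, 0) = 0 := by
    intro p v hp
    have h := key2 ((ContinuousLinearMap.inl ℝ (E n) (E n)).comp
      (ContinuousLinearMap.snd ℝ (E n) (E n))) p (0, v) hp
    have h2 : (fun q : E n × E n => fderiv ℝ L q (((ContinuousLinearMap.inl ℝ (E n) (E n)).comp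
      (ContinuousLinearMap.snd ℝ (E n) (E n))) q)) =ᶠ[𝓝 p] fun q => (0:ℝ) := by
      filter_upwards [hnhds p hp] with q hq
      simpa using Z q hq
    rw [h2.fderiv_eq] at h
    have h3 : fderiv ℝ (fderiv ℝ L) p (0, v) (p.2, 0) + fderiv ℝ L p (v, 0) = 0 := by
      simpa using h.symm
    rw [symm _ _ _ hp, HB p v hp] at h3
    linarith
  have hx : ∀ a : E n, HasFDerivAt (fun a : E n => L (a, y))
      ((fderiv ℝ L (a, y)).comp (ContinuousLinearMap.inl ℝ (E n) (E n))) a := fun a =>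
    (hD (a, y) hy).hasFDerivAt.comp a (hasFDerivAt_prodMk_left a y)
  refine is_const_of_fderiv_eq_zero (𝕜 := ℝ) (f := fun a : E n => L (a, y))
    (fun a => (hx a).differentiableAt) (fun a => ?_) x x'
  rw [(hx a).fderiv]
  refine ContinuousLinearMap.ext fun v => ?_
  simpa using A0 (a, y) v hy

/-- a Finsler function `F` on `ℝⁿ` is independent of its first argument
(Minkowski space) iff `∑_k ∂²(F²)/∂x^k∂y^i · y^k = ½ ∑_k ∂²(F²)/∂x^i∂y^k · y^k`. -/
theorem statement13 {n : ℕ} (F : E n × E n → ℝ) (hF : IsFinsler F) :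
    (∀ x x' y : E n, F (x, y) = F (x', y)) ↔
    (∀ (x y : E n), y ≠ 0 → ∀ i : Fin n,
      ∑ k, pdx k (pdy i (fun p => F p ^ 2)) (x, y) * y k =
        (1 / 2) * ∑ k, pdx i (pdy k (fun p => F p ^ 2)) (x, y) * y k) := by
  constructor
  · intro h x y _ i
    have h0 : ∀ k j, pdx k (pdy j (fun p => F p ^ 2)) (x, y) = 0 := fun k j =>
      pdx_zero_of_indep _ (pdy_indep _ (fun a a' b => by simp only [h a a' b]) j) k (x, y)
    simp [h0]
  · intro H x x' y
    by_cases hy : y = 0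
    · have h0 : ∀ a : E n, F (a, 0) = 0 := by
        intro a
        have := hF.homog a 0 2 (by norm_num)
        rw [smul_zero] at this
        linarith
      rw [hy, h0, h0]
    · have h := backward (fun p => F p ^ 2) (hF.smooth.pow 2)
        (fun a b c hc => by simp only [hF.homog a b c hc]; ring) H x x' y hy
      exact (pow_left_inj₀ (hF.pos x y hy).le (hF.pos x' y hy).le two_ne_zero).1 h
end
end

section
/- Let g be a smooth Riemannian metric on ℝⁿ and set Q(x,y) = ∑_{k,j} g_{kj}(x)·y^k·y^j. Then g is constant — g_{ij}(x) = g_{ij}(x') for all x, x' and all i, j, i.e. (ℝⁿ, g) is a Euclidean space in the given coordinates — if and only if for every x ∈ ℝⁿ, every y ∈ ℝⁿ and every index i: ∑_s ∂²Q/∂x^s∂y^i(x,y)·y^s = ½·∑_s ∂²Q/∂x^i∂y^s(x,y)·y^s. -/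
open scoped BigOperators Topology
noncomputable section

lemma hasFDerivAt_gcomp {n : ℕ} (f : E n → ℝ) (hf : ContDiff ℝ (⊤ : ℕ∞) f) (p : E n × E n) :
    HasFDerivAt (fun p : E n × E n => f p.1)
      ((fderiv ℝ f p.1).comp (ContinuousLinearMap.fst ℝ (E n) (E n))) p := by
  have h1 : HasFDerivAt f (fderiv ℝ f p.1) p.1 :=
    ((hf.differentiable (by simp)) p.1).hasFDerivAt
  exact h1.comp p (hasFDerivAt_fst)

lemma hasFDerivAt_ycoord {n : ℕ} (k : Fin n) (p : E n × E n) :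
    HasFDerivAt (fun p : E n × E n => p.2 k)
      ((ContinuousLinearMap.proj (R := ℝ) (φ := fun _ : Fin n => ℝ) k).comp
        (ContinuousLinearMap.snd ℝ (E n) (E n))) p :=
  ((ContinuousLinearMap.proj (R := ℝ) (φ := fun _ : Fin n => ℝ) k).comp
        (ContinuousLinearMap.snd ℝ (E n) (E n))).hasFDerivAt

lemma pdy_Q {n : ℕ} (g : E n → Matrix (Fin n) (Fin n) ℝ)
    (hg : ∀ i j : Fin n, ContDiff ℝ (⊤ : ℕ∞) (fun x => g x i j))
    (hs : ∀ x i j, g x i j = g x j i) (i : Fin n) :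
    pdy i (fun p : E n × E n => ∑ k, ∑ j, g p.1 k j * p.2 k * p.2 j)
      = fun p => ∑ j, (2 * g p.1 i j) * p.2 j := by
  funext p
  have h := HasFDerivAt.fun_sum (u := Finset.univ) fun (k : Fin n) _ =>
    HasFDerivAt.fun_sum (u := Finset.univ) fun (j : Fin n) _ =>
      ((hasFDerivAt_gcomp _ (hg k j) p).fun_mul (hasFDerivAt_ycoord k p)).fun_mul
        (hasFDerivAt_ycoord j p)
  unfold pdy
  rw [h.fderiv]
  simp [Pi.single_apply, Finset.sum_add_distrib, mul_add]
  rw [← Finset.sum_add_distrib]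
  refine Finset.sum_congr rfl fun j _ => ?_
  rw [hs p.1 j i]; ring

lemma pdx_pdy_Q {n : ℕ} (g : E n → Matrix (Fin n) (Fin n) ℝ)
    (hg : ∀ i j : Fin n, ContDiff ℝ (⊤ : ℕ∞) (fun x => g x i j))
    (hs : ∀ x i j, g x i j = g x j i) (s i : Fin n) (x y : E n) :
    pdx s (pdy i (fun p : E n × E n => ∑ k, ∑ j, g p.1 k j * p.2 k * p.2 j)) (x, y)
      = ∑ j, 2 * fderiv ℝ (fun x => g x i j) x (Pi.single s 1) * y j := by
  rw [pdy_Q g hg hs]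
  have h := HasFDerivAt.fun_sum (u := Finset.univ) fun (j : Fin n) _ =>
      ((hasFDerivAt_gcomp _ (hg i j) (x, y)).const_mul 2).fun_mul (hasFDerivAt_ycoord j (x, y))
  unfold pdx
  rw [h.fderiv]
  simp
  refine Finset.sum_congr rfl fun j _ => ?_
  ring

lemma polar {n : ℕ} (A : Fin n → Fin n → ℝ)
    (h : ∀ y : E n, ∑ s, (∑ j, A s j * y j) * y s = 0) (s j : Fin n) :
    A s j + A j s = 0 := by
  have h1 := h (Pi.single s 1)
  have h2 := h (Pi.single j 1)
  have h3 := h (Pi.single s 1 + Pi.single j 1)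
  simp [Pi.single_apply, mul_add, Finset.sum_add_distrib, add_mul] at h1 h2 h3
  linarith

/-- a smooth Riemannian metric `g` on `ℝⁿ` is constant (Euclidean in the
given coordinates) iff `Q(x,y) = ∑ g_{kj}(x) y^k y^j` satisfies
`∑_s ∂²Q/∂x^s∂y^i · y^s = ½ ∑_s ∂²Q/∂x^i∂y^s · y^s`. -/
theorem statement14 {n : ℕ} (g : E n → Matrix (Fin n) (Fin n) ℝ)
    (hgsmooth : ∀ i j : Fin n, ContDiff ℝ (⊤ : ℕ∞) (fun x => g x i j))
    (hgpos : ∀ x : E n, (g x).PosDef)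
    (Q : E n × E n → ℝ)
    (hQ : Q = fun p => ∑ k, ∑ j, g p.1 k j * p.2 k * p.2 j) :
    (∀ x x' : E n, g x = g x') ↔
    (∀ (x y : E n), ∀ i : Fin n,
      ∑ s, pdx s (pdy i Q) (x, y) * y s =
        (1 / 2) * ∑ s, pdx i (pdy s Q) (x, y) * y s) := by
  have hs : ∀ x i j, g x i j = g x j i := fun x i j => by
    have := (hgpos x).isHermitian.apply j i
    simpa using this
  subst hQ
  simp only [pdx_pdy_Q g hgsmooth hs]
  constructor
  · intro h x y i
    have h0 : ∀ i j, fderiv ℝ (fun x => g x i j) x = 0 := fun i j => by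
      have : (fun x => g x i j) = fun _ => g 0 i j := funext fun z => by rw [h z 0]
      rw [this]; simp
    simp [h0]
  · intro h
    have key : ∀ x (i s j : Fin n),
        fderiv ℝ (fun x => g x i j) x (Pi.single s 1)
        + fderiv ℝ (fun x => g x i s) x (Pi.single j 1)
        = fderiv ℝ (fun x => g x s j) x (Pi.single i 1) := by
      intro x i s j
      have := polar (fun s j => 2 * fderiv ℝ (fun x => g x i j) x (Pi.single s 1)
        - (1 / 2) * (2 * fderiv ℝ (fun x => g x s j) x (Pi.single i 1))) (fun y => by
          have := h x y i
          simp only [sub_mul, Finset.sum_sub_distrib]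
          rw [this, sub_eq_zero, Finset.mul_sum]
          refine Finset.sum_congr rfl fun s _ => ?_
          rw [← mul_assoc, Finset.mul_sum]
          congr 1
          refine Finset.sum_congr rfl fun j _ => ?_
          ring) s j
      have e : (fun x => g x j s) = fun x => g x s j := funext fun x => hs x j s
      simp only [e] at this
      linarith
    have zero : ∀ x (i s j : Fin n), fderiv ℝ (fun x => g x i s) x (Pi.single j 1) = 0 := by
      intro x i s j
      have h1 := key x i s j
      have h2 := key x s i j
      have e : (fun x => g x s i) = fun x => g x i s := funext fun x => hs x s i
      rw [e] at h2
      linarith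
    intro x x'
    ext i j
    refine is_const_of_fderiv_eq_zero (𝕜 := ℝ) (f := fun x => g x i j)
      ((hgsmooth i j).differentiable (by simp)) (fun z => ?_) x x'
    ext v
    rw [pi_eq_sum_univ' v, map_sum]
    refine Finset.sum_eq_zero fun k _ => ?_
    rw [map_smul]
    have := zero z i j k
    rw [this, smul_zero]
end
end

section
/- Let N : ℝⁿ × ℝⁿ → ℝ be a weak Finsler function: N is continuous, and for each p the function N(p,·) is nonnegative, vanishes only at 0, absolutely homogeneous (N(p, λv) = |λ|·N(p,v) for all λ ∈ ℝ) and convex; moreover assume condition (C): for every a ∈ ℝⁿ ∖ {0} and b ∈ ℝⁿ, the limit N_g(v) := lim_{t→∞} N(t·a + b, v) exists for every v ∈ ℝⁿ, and N_g is continuous, nonnegative, vanishes only at 0, absolutely homogeneous and convex. Suppose (ℝⁿ, N) is projectively flat in a parameter-preserving manner in the following sense: for every affine line ℓ ⊆ ℝⁿ there exist a, b ∈ ℝⁿ with a ≠ 0 such that ℓ = { t·a + b : t ∈ ℝ } and N(t·a + b, a) = 1 for all t ∈ ℝ (every straight line carries a parametrization that is a geodesic of constant speed 1). Then N is independent of its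 first argument, i.e. N(p, v) = N(q, v) for all p, q, v ∈ ℝⁿ, so (ℝⁿ, N) is a Minkowski space. -/
open scoped BigOperators Topology
noncomputable section

/-- a weak Finsler function on `ℝⁿ` (continuous, with norm-like fibres,
satisfying condition (C)) which is projectively flat in a parameter-preserving manner
(every affine line carries a parametrization which is a geodesic of constant speed `1`)
is independent of its first argument, i.e. `(ℝⁿ, N)` is a Minkowski space. -/
theorem statement16 {n : ℕ} (N : E n → E n → ℝ)
    (hcont : Continuous fun p : E n × E n => N p.1 p.2)
    (hnonneg : ∀ (p v : E n), 0 ≤ N p v)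
    (hdef : ∀ (p v : E n), N p v = 0 → v = 0)
    (hhomog : ∀ (p : E n) (c : ℝ) (v : E n), N p (c • v) = |c| * N p v)
    (hconvex : ∀ p : E n, ConvexOn ℝ Set.univ (N p))
    (hC : ∀ (a : E n), a ≠ 0 → ∀ b : E n, ∃ Ng : E n → ℝ,
      (∀ v : E n, Filter.Tendsto (fun t : ℝ => N (t • a + b) v) Filter.atTop (nhds (Ng v))) ∧
      Continuous Ng ∧ (∀ v : E n, 0 ≤ Ng v) ∧ (∀ v : E n, Ng v = 0 → v = 0) ∧
      (∀ (c : ℝ) (v : E n), Ng (c • v) = |c| * Ng v) ∧ ConvexOn ℝ Set.univ Ng)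
    (hflat : ∀ (a : E n), a ≠ 0 → ∀ b : E n, ∃ a' b' : E n,
      {p : E n | ∃ t : ℝ, p = t • a + b} = {p : E n | ∃ t : ℝ, p = t • a' + b'} ∧
      ∀ t : ℝ, N (t • a' + b') a' = 1) :
    ∀ (p q v : E n), N p v = N q v := by
  -- invariance along lines
  have hinv : ∀ (a : E n), a ≠ 0 → ∀ (b : E n) (t : ℝ), N (t • a + b) a = N b a := by
    intro a ha b
    obtain ⟨a', b', hset, h1⟩ := hflat a ha b
    have hm : ∀ t : ℝ, ∃ s : ℝ, t • a + b = s • a' + b' := by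
      intro t
      have h : t • a + b ∈ {p : E n | ∃ t : ℝ, p = t • a + b} := ⟨t, rfl⟩
      rw [hset] at h
      exact h
    obtain ⟨s0, h0⟩ := hm 0
    obtain ⟨s1, hs1⟩ := hm 1
    have hac : a = (s1 - s0) • a' := by
      have e : a = (((1 : ℝ) • a + b) - ((0 : ℝ) • a + b)) := by module
      rw [e, hs1, h0]
      module
    have key : ∀ t : ℝ, N (t • a + b) a = |s1 - s0| := by
      intro t
      obtain ⟨s, hs⟩ := hm t
      have e : N (t • a + b) a = N (t • a + b) ((s1 - s0) • a') := by rw [← hac]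
      rw [e, hhomog, hs, h1, mul_one]
    intro t
    have k0 := key 0
    rw [zero_smul, zero_add] at k0
    rw [key t, k0]
  intro p q v
  by_cases hv : v = 0
  · have hz : ∀ r : E n, N r 0 = 0 := by
      intro r
      simpa using hhomog r 0 0
    rw [hv, hz, hz]
  obtain ⟨F, hF, hFc, -⟩ := hC v hv p
  obtain ⟨G, hG, hGc, -⟩ := hC v hv q
  have hFv : F v = N p v := by
    refine tendsto_nhds_unique (hF v) ?_
    simp only [hinv v hv p]
    exact tendsto_const_nhds
  have hGv : G v = N q v := by
    refine tendsto_nhds_unique (hG v) ?_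
    simp only [hinv v hv q]
    exact tendsto_const_nhds
  have hline : ∀ (a b : E n) (t : ℝ), N (t • a + b) a = N b a := by
    intro a b t
    by_cases ha : a = 0
    · rw [ha, smul_zero, zero_add]
    · exact hinv a ha b t
  -- the two limits agree on `v + e • (q - p)` for `e ≠ 0`
  have hFG : ∀ e : ℝ, e ≠ 0 → F (v + e • (q - p)) = G (v + e • (q - p)) := by
    intro e he
    refine tendsto_nhds_unique (hF _) ?_
    have hG' := (hG (v + e • (q - p))).comp
      (Filter.tendsto_atTop_add_const_right Filter.atTop e⁻¹ Filter.tendsto_id)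
    refine hG'.congr ?_
    intro t
    have e1 : (t + e⁻¹) • v + q = e⁻¹ • (v + e • (q - p)) + (t • v + p) := by
      rw [smul_add, smul_smul, inv_mul_cancel₀ he]
      module
    simp only [Function.comp, id]
    rw [e1, hline]
  have hlim : ∀ H : E n → ℝ, Continuous H →
      Filter.Tendsto (fun e : ℝ => H (v + e • (q - p))) (𝓝[≠] 0) (𝓝 (H v)) := by
    intro H hH
    have hc : Continuous fun e : ℝ => H (v + e • (q - p)) := by fun_prop
    have h := hc.tendsto 0
    rw [zero_smul, add_zero] at h
    exact h.mono_left nhdsWithin_le_nhds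
  rw [← hFv, ← hGv]
  refine tendsto_nhds_unique (hlim F hFc) ((hlim G hGc).congr' ?_)
  filter_upwards [self_mem_nhdsWithin] with e he
  exact (hFG e he).symm
end
end
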